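/- Suppose d^D = d^{π_D}, B_w > 1, and |f'(x)| ≤ B_{f'} for all 0 ≤ x ≤ B_w. Then the optimal dual variable of the constrained & regularized LP satisfies ‖v*_{α,B_w}‖_∞ ≤ (α·B_{f'} + 1)/(1−γ). -/

import Mathlib

open MeasureTheory
open scoped BigOperators ENNReal

namespace ProRL

/-- The discrete measure on a type induced by a real-valued weight function. -/
noncomputable def discMeasure {X : Type*} [MeasurableSpace X] (p : X → ℝ) : Measure X :=
  Measure.sum fun x => ENNReal.ofReal (p x) • Measure.dirac x

variable {S A : Type*} [Fintype S] [Fintype A]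

/-- The `t`-step state-action distribution of policy `π` started from `μ0`. -/
noncomputable def saDist (P : S → A → S → ℝ) (μ0 : S → ℝ) (π : S → A → ℝ) :
    ℕ → S → A → ℝ
  | 0 => fun s a => μ0 s * π s a
  | t + 1 => fun s a =>
      (∑ s' : S, ∑ a' : A, saDist P μ0 π t s' a' * P s' a' s) * π s a

/-- The discounted state-action occupancy `d^π(s,a)`. -/
noncomputable def occ (P : S → A → S → ℝ) (μ0 : S → ℝ) (γ : ℝ) (π : S → A → ℝ)
    (s : S) (a : A) : ℝ :=
  (1 - γ) * ∑' t : ℕ, γ ^ t * saDist P μ0 π t s a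

/-- The (normalized) expected discounted return `J(π) = E_{d^π}[r]`. -/
noncomputable def Jret (P : S → A → S → ℝ) (r : S → A → ℝ) (μ0 : S → ℝ) (γ : ℝ)
    (π : S → A → ℝ) : ℝ :=
  ∑ s : S, ∑ a : A, occ P μ0 γ π s a * r s a

/-- `π` is a (stationary, stochastic) policy. -/
def IsPolicy (π : S → A → ℝ) : Prop :=
  (∀ s a, 0 ≤ π s a) ∧ ∀ s, ∑ a : A, π s a = 1

/-- The Bellman residual `e_v(s,a) = r(s,a) + γ ∑_{s'} P(s'|s,a) v(s') − v(s)`. -/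
noncomputable def eV (P : S → A → S → ℝ) (r : S → A → ℝ) (γ : ℝ) (v : S → ℝ)
    (s : S) (a : A) : ℝ :=
  r s a + γ * ∑ s' : S, P s a s' * v s' - v s

/-- The population Lagrangian `L_α(v,w)`. -/
noncomputable def Lag (P : S → A → S → ℝ) (r : S → A → ℝ) (μ0 : S → ℝ) (γ : ℝ)
    (dD : S → A → ℝ) (f : ℝ → ℝ) (α : ℝ) (v : S → ℝ) (w : S → A → ℝ) : ℝ :=
  (1 - γ) * ∑ s : S, μ0 s * v s
    - α * ∑ s : S, ∑ a : A, dD s a * f (w s a)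
    + ∑ s : S, ∑ a : A, dD s a * (w s a * eV P r γ v s a)

/-- The empirical Lagrangian `L̂_α(v,w)` built from the transition dataset `D`
(`D i = ((sᵢ,aᵢ), s'ᵢ)`, with `rᵢ = r sᵢ aᵢ`) and initial-state dataset `D0`. -/
noncomputable def empLag (r : S → A → ℝ) (γ : ℝ) (f : ℝ → ℝ) (α : ℝ) {n n0 : ℕ}
    (D : Fin n → (S × A) × S) (D0 : Fin n0 → S) (v : S → ℝ) (w : S → A → ℝ) : ℝ :=
  (1 - γ) * ((n0 : ℝ)⁻¹ * ∑ j : Fin n0, v (D0 j))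
    - α * ((n : ℝ)⁻¹ * ∑ i : Fin n, f (w (D i).1.1 (D i).1.2))
    + (n : ℝ)⁻¹ * ∑ i : Fin n,
        w (D i).1.1 (D i).1.2 *
          (r (D i).1.1 (D i).1.2 + γ * v (D i).2 - v (D i).1.1)

/-- Per-state normalization of a state-action weight into a policy
(uniform where the state marginal is not positive). -/
noncomputable def normPolicy (d : S → A → ℝ) (s : S) (a : A) : ℝ :=
  if 0 < ∑ a' : A, d s a' then d s a / ∑ a' : A, d s a'
  else (Fintype.card A : ℝ)⁻¹

/-- Policy extraction from a density ratio `w` and a behavior policy `piD`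
(uniform where the normalizer vanishes). -/
noncomputable def extractPolicy (piD w : S → A → ℝ) (s : S) (a : A) : ℝ :=
  if 0 < ∑ a' : A, w s a' * piD s a' then
    w s a * piD s a / ∑ a' : A, w s a' * piD s a'
  else (Fintype.card A : ℝ)⁻¹

/-- Behavior policy `π_D(a|s)` obtained from the data distribution `d^D`. -/
noncomputable def behPolicy (dD : S → A → ℝ) : S → A → ℝ := normPolicy dD

/-- The state-action measure `d(s,a) = w(s,a)·d^D(s,a)`. -/
noncomputable def dstar (dD w : S → A → ℝ) : S → A → ℝ := fun s a => w s a * dD s a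

/-- The weighted `L²(d^D)` norm of a state-action function. -/
noncomputable def l2nrm (dD g : S → A → ℝ) : ℝ :=
  Real.sqrt (∑ s : S, ∑ a : A, dD s a * g s a ^ 2)

/-- `‖π(·|s) − π'(·|s)‖₁`. -/
noncomputable def l1Pol (π π' : S → A → ℝ) (s : S) : ℝ := ∑ a : A, |π s a - π' s a|

/-- `E_{s ∼ d}[‖π(·|s) − π'(·|s)‖₁]` where `d` is a state-action distribution. -/
noncomputable def expL1 (d π π' : S → A → ℝ) : ℝ :=
  ∑ s : S, (∑ a : A, d s a) * l1Pol π π' s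

/-- The statistical error term `ε_stat`. -/
noncomputable def epsStat (γ α Bv Bf Bw Be δ : ℝ) (nV nW n n0 : ℕ) : ℝ :=
  (1 - γ) * Bv * Real.sqrt (2 * Real.log (4 * (nV : ℝ) / δ) / (n0 : ℝ))
    + (α * Bf + Bw * Be) *
        Real.sqrt (2 * Real.log (4 * ((nV : ℝ) * (nW : ℝ)) / δ) / (n : ℝ))

/-- The Bellman flow equations for a state-action measure `d`. -/
def BellmanFlow (P : S → A → S → ℝ) (μ0 : S → ℝ) (γ : ℝ) (d : S → A → ℝ) : Prop :=
  ∀ s : S, ∑ a : A, d s a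
    = (1 - γ) * μ0 s + γ * ∑ s' : S, ∑ a' : A, P s' a' s * d s' a'

/-- `(v,w)` is a saddle point of `max_{w ≥ 0} min_v L_α(v,w)`. -/
def IsSaddle (P : S → A → S → ℝ) (r : S → A → ℝ) (μ0 : S → ℝ) (γ : ℝ)
    (dD : S → A → ℝ) (f : ℝ → ℝ) (α : ℝ) (v : S → ℝ) (w : S → A → ℝ) : Prop :=
  (∀ s a, 0 ≤ w s a) ∧
  (∀ v' : S → ℝ, Lag P r μ0 γ dD f α v w ≤ Lag P r μ0 γ dD f α v' w) ∧
  (∀ w' : S → A → ℝ, (∀ s a, 0 ≤ w' s a) →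
    Lag P r μ0 γ dD f α v w' ≤ Lag P r μ0 γ dD f α v w)

/-- `(v,w)` is a saddle point of `max_{0 ≤ w ≤ Bw} min_v L_α(v,w)` (constrained LP). -/
def IsSaddleB (P : S → A → S → ℝ) (r : S → A → ℝ) (μ0 : S → ℝ) (γ : ℝ)
    (dD : S → A → ℝ) (f : ℝ → ℝ) (α Bw : ℝ) (v : S → ℝ) (w : S → A → ℝ) : Prop :=
  (∀ s a, 0 ≤ w s a ∧ w s a ≤ Bw) ∧
  (∀ v' : S → ℝ, Lag P r μ0 γ dD f α v w ≤ Lag P r μ0 γ dD f α v' w) ∧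
  (∀ w' : S → A → ℝ, (∀ s a, 0 ≤ w' s a ∧ w' s a ≤ Bw) →
    Lag P r μ0 γ dD f α v w' ≤ Lag P r μ0 γ dD f α v w)

/-- `(vhat, what)` is an exact max-min point of the empirical Lagrangian over `V × W`:
`vhat ∈ argmin_{v ∈ V} L̂(v, what)` and `what ∈ argmax_{w ∈ W} min_{v ∈ V} L̂(v, w)`. -/
def IsProRLOutput (r : S → A → ℝ) (γ : ℝ) (f : ℝ → ℝ) (α : ℝ)
    (V : Finset (S → ℝ)) (W : Finset (S → A → ℝ)) {n n0 : ℕ}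
    (D : Fin n → (S × A) × S) (D0 : Fin n0 → S)
    (vhat : S → ℝ) (what : S → A → ℝ) : Prop :=
  vhat ∈ V ∧ what ∈ W ∧
  (∀ v ∈ V, empLag r γ f α D D0 vhat what ≤ empLag r γ f α D D0 v what) ∧
  ∀ w ∈ W, ∀ vw ∈ V,
    (∀ v ∈ V, empLag r γ f α D D0 vw w ≤ empLag r γ f α D D0 v w) →
      empLag r γ f α D D0 vw w ≤ empLag r γ f α D D0 vhat what

/-- Weight of a transition tuple `((s,a),s')` under `(s,a) ∼ d^D`, `s' ∼ P(·|s,a)`. -/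
noncomputable def tupleWeight (P : S → A → S → ℝ) (dD : S → A → ℝ)
    (x : (S × A) × S) : ℝ :=
  dD x.1.1 x.1.2 * P x.1.1 x.1.2 x.2

/-- The joint law of the transition dataset `D` (i.i.d. from `d^D ⊗ P`) and the
initial-state dataset `D0` (i.i.d. from `μ0`). -/
noncomputable def dataMeasure [MeasurableSpace S] [MeasurableSpace A]
    (P : S → A → S → ℝ) (dD : S → A → ℝ) (μ0 : S → ℝ) (n n0 : ℕ) :
    Measure ((Fin n → (S × A) × S) × (Fin n0 → S)) :=
  (Measure.pi fun _ : Fin n => discMeasure (tupleWeight P dD)).prod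
    (Measure.pi fun _ : Fin n0 => discMeasure μ0)

/-- The joint law of datasets `D1`, `D2` (both i.i.d. from `d^D ⊗ P`) and `D0`
(i.i.d. from `μ0`), used by PRO-RL-BC. -/
noncomputable def dataMeasure3 [MeasurableSpace S] [MeasurableSpace A]
    (P : S → A → S → ℝ) (dD : S → A → ℝ) (μ0 : S → ℝ) (n1 n2 n0 : ℕ) :
    Measure ((Fin n1 → (S × A) × S) × (Fin n2 → (S × A) × S) × (Fin n0 → S)) :=
  (Measure.pi fun _ : Fin n1 => discMeasure (tupleWeight P dD)).prod
    ((Measure.pi fun _ : Fin n2 => discMeasure (tupleWeight P dD)).prod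
      (Measure.pi fun _ : Fin n0 => discMeasure μ0))

/-- `v` is the optimal value function: it satisfies the Bellman optimality equation. -/
def IsOptValue [Nonempty A] (P : S → A → S → ℝ) (r : S → A → ℝ) (γ : ℝ)
    (v : S → ℝ) : Prop :=
  ∀ s : S, v s = Finset.univ.sup' Finset.univ_nonempty
    (fun a : A => r s a + γ * ∑ s' : S, P s a s' * v s')

/-- Basic assumptions on the MDP, the regularizer-free data, and the data distribution. -/
structure MDPAssumptions (P : S → A → S → ℝ) (r : S → A → ℝ) (μ0 : S → ℝ) (γ : ℝ)
    (dD : S → A → ℝ) : Prop where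
  P_nonneg : ∀ s a s', 0 ≤ P s a s'
  P_sum : ∀ s a, ∑ s' : S, P s a s' = 1
  r_nonneg : ∀ s a, 0 ≤ r s a
  r_le_one : ∀ s a, r s a ≤ 1
  γ_nonneg : 0 ≤ γ
  γ_lt_one : γ < 1
  μ0_pos : ∀ s, 0 < μ0 s
  μ0_sum : ∑ s : S, μ0 s = 1
  dD_nonneg : ∀ s a, 0 ≤ dD s a
  dD_sum : ∑ s : S, ∑ a : A, dD s a = 1

/-- Regularity of the regularizer `f`: continuously differentiable with derivative `f'`,
`M_f`-strongly convex, and with `|f'| ≤ Bf'`, `|f| ≤ Bf` on `[0, Bw]`. -/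
structure RegAssumptions (f f' : ℝ → ℝ) (Mf Bw Bf' Bf : ℝ) : Prop where
  deriv : ∀ x, HasDerivAt f (f' x) x
  strong : StrongConvexOn Set.univ Mf f
  Mf_pos : 0 < Mf
  f'_bdd : ∀ x, 0 ≤ x → x ≤ Bw → |f' x| ≤ Bf'
  f_bdd : ∀ x, 0 ≤ x → x ≤ Bw → |f x| ≤ Bf

/-- `w` is an optimal density ratio of the unregularized LP (the set `W*₀`). -/
def OptRatio (P : S → A → S → ℝ) (r : S → A → ℝ) (μ0 : S → ℝ) (γ : ℝ)
    (dD : S → A → ℝ) (w : S → A → ℝ) : Prop :=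
  (∀ s a, 0 ≤ w s a) ∧ BellmanFlow P μ0 γ (dstar dD w) ∧
  ∀ w' : S → A → ℝ, (∀ s a, 0 ≤ w' s a) → BellmanFlow P μ0 γ (dstar dD w') →
    ∑ s : S, ∑ a : A, dstar dD w' s a * r s a
      ≤ ∑ s : S, ∑ a : A, dstar dD w s a * r s a

theorem normPolicy_isPolicy {S A : Type*} [Fintype A] [Nonempty A] {d : S → A → ℝ} (hd : ∀ s a, 0 ≤ d s a) :
    IsPolicy (normPolicy d) := by
  refine ⟨fun s a => ?_, fun s => ?_⟩
  · unfold normPolicy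
    split_ifs with h
    · exact div_nonneg (hd s a) h.le
    · positivity
  · unfold normPolicy
    split_ifs with h
    · rw [← Finset.sum_div, div_self h.ne']
    · simp

section Occupancy

variable {P : S → A → S → ℝ} {μ0 : S → ℝ} {π : S → A → ℝ} {γ : ℝ}

theorem saDist_nonneg (hP : ∀ s a s', 0 ≤ P s a s') (hμ : ∀ s, 0 ≤ μ0 s)
    (hπ : IsPolicy π) (t : ℕ) (s : S) (a : A) : 0 ≤ saDist P μ0 π t s a := by
  induction t generalizing s a with
  | zero => exact mul_nonneg (hμ s) (hπ.1 s a)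
  | succ t ih =>
    exact mul_nonneg (Finset.sum_nonneg fun s' _ => Finset.sum_nonneg fun a' _ =>
      mul_nonneg (ih s' a') (hP s' a' s)) (hπ.1 s a)

theorem sum_saDist_zero (hπ : IsPolicy π) (s : S) :
    ∑ a, saDist P μ0 π 0 s a = μ0 s := by
  simp only [saDist, ← Finset.mul_sum, hπ.2 s, mul_one]

theorem sum_saDist_succ (hπ : IsPolicy π) (t : ℕ) (s : S) :
    ∑ a, saDist P μ0 π (t + 1) s a = ∑ s', ∑ a', saDist P μ0 π t s' a' * P s' a' s := by
  simp only [saDist, ← Finset.mul_sum, hπ.2 s, mul_one]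

theorem sum_saDist (hP : ∀ s a, ∑ s', P s a s' = 1) (hμ : ∑ s, μ0 s = 1)
    (hπ : IsPolicy π) (t : ℕ) : ∑ s, ∑ a, saDist P μ0 π t s a = 1 := by
  induction t with
  | zero => simp only [sum_saDist_zero hπ, hμ]
  | succ t ih =>
    simp only [sum_saDist_succ hπ]
    rw [Finset.sum_comm, ← ih]
    refine Finset.sum_congr rfl fun s _ => ?_
    rw [Finset.sum_comm]
    refine Finset.sum_congr rfl fun a _ => ?_
    rw [← Finset.mul_sum, hP, mul_one]

theorem saDist_le_one (hP0 : ∀ s a s', 0 ≤ P s a s') (hP : ∀ s a, ∑ s', P s a s' = 1)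
    (hμ0 : ∀ s, 0 ≤ μ0 s) (hμ : ∑ s, μ0 s = 1) (hπ : IsPolicy π) (t : ℕ) (s : S) (a : A) :
    saDist P μ0 π t s a ≤ 1 := by
  have hn := saDist_nonneg hP0 hμ0 hπ t
  calc saDist P μ0 π t s a ≤ ∑ a, saDist P μ0 π t s a :=
        Finset.single_le_sum (fun a _ => hn s a) (Finset.mem_univ a)
    _ ≤ ∑ s, ∑ a, saDist P μ0 π t s a :=
        Finset.single_le_sum (f := fun s => ∑ a, saDist P μ0 π t s a)
          (fun s _ => Finset.sum_nonneg fun a _ => hn s a) (Finset.mem_univ s)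
    _ = 1 := sum_saDist hP hμ hπ t

theorem summable_discounted_saDist (hP0 : ∀ s a s', 0 ≤ P s a s')
    (hP : ∀ s a, ∑ s', P s a s' = 1) (hμ0 : ∀ s, 0 ≤ μ0 s) (hμ : ∑ s, μ0 s = 1)
    (hπ : IsPolicy π) (hγ0 : 0 ≤ γ) (hγ : γ < 1) (s : S) (a : A) :
    Summable fun t => γ ^ t * saDist P μ0 π t s a :=
  Summable.of_nonneg_of_le
    (fun t => mul_nonneg (pow_nonneg hγ0 t) (saDist_nonneg hP0 hμ0 hπ t s a))
    (fun t => mul_le_of_le_one_right (pow_nonneg hγ0 t)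
      (saDist_le_one hP0 hP hμ0 hμ hπ t s a))
    (summable_geometric_of_lt_one hγ0 hγ)

/-- The discounted occupancy of a policy satisfies the Bellman flow equations. -/
theorem occ_bellmanFlow (hP0 : ∀ s a s', 0 ≤ P s a s')
    (hP : ∀ s a, ∑ s', P s a s' = 1) (hμ0 : ∀ s, 0 ≤ μ0 s) (hμ : ∑ s, μ0 s = 1)
    (hπ : IsPolicy π) (hγ0 : 0 ≤ γ) (hγ : γ < 1) :
    BellmanFlow P μ0 γ (occ P μ0 γ π) := by
  intro s
  have hs := summable_discounted_saDist (μ0 := μ0) hP0 hP hμ0 hμ hπ hγ0 hγ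
  have hflow : HasSum (fun t => γ ^ (t + 1) * ∑ a, saDist P μ0 π (t + 1) s a)
      (γ * ∑ s', ∑ a', P s' a' s * ∑' t, γ ^ t * saDist P μ0 π t s' a') := by
    have h := (hasSum_sum (s := Finset.univ) fun s' _ =>
      hasSum_sum (s := Finset.univ) fun a' _ => ((hs s' a').hasSum.mul_left (P s' a' s))).mul_left γ
    refine h.congr_fun fun t => ?_
    rw [sum_saDist_succ hπ]
    simp only [Finset.mul_sum]
    refine Finset.sum_congr rfl fun s' _ => Finset.sum_congr rfl fun a' _ => ?_
    ring
  have htotal : HasSum (fun t => γ ^ t * ∑ a, saDist P μ0 π t s a)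
      (∑ a, ∑' t, γ ^ t * saDist P μ0 π t s a) := by
    simpa only [Finset.mul_sum] using
      hasSum_sum (s := Finset.univ) fun a _ => (hs s a).hasSum
  have hsplit := htotal.tsum_eq.symm.trans htotal.summable.tsum_eq_zero_add
  rw [hflow.tsum_eq, sum_saDist_zero hπ, pow_zero, one_mul] at hsplit
  simp only [occ, ← Finset.mul_sum, mul_left_comm _ (1 - γ)]
  rw [hsplit]
  ring

end Occupancy

section Saddle

variable {P : S → A → S → ℝ} {r : S → A → ℝ} {μ0 : S → ℝ} {γ : ℝ} {dD : S → A → ℝ}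
  {f : ℝ → ℝ} {α : ℝ} {v : S → ℝ} {w : S → A → ℝ}

open Classical in
/-- Shifting the dual variable at one state changes the Lagrangian by the flow residual. -/
theorem Lag_add_single (s : S) (c : ℝ) :
    Lag P r μ0 γ dD f α (v + Pi.single s c) w = Lag P r μ0 γ dD f α v w
      + c * ((1 - γ) * μ0 s + γ * ∑ s', ∑ a', P s' a' s * dstar dD w s' a'
        - ∑ a, dstar dD w s a) := by
  have he : ∀ s' a', eV P r γ (v + Pi.single s c) s' a'
      = eV P r γ v s' a' + (c * (γ * P s' a' s) - if s' = s then c else 0) := by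
    intro s' a'
    simp only [eV, Pi.add_apply, Pi.single_apply, mul_add, Finset.sum_add_distrib, mul_ite,
      mul_zero, Finset.sum_ite_eq', Finset.mem_univ, if_true]
    ring
  have hd : ∑ s', ∑ a', dD s' a' * (w s' a' * (if s' = s then c else 0))
      = c * ∑ a, dstar dD w s a := by
    rw [Finset.sum_eq_single s (fun s' _ hs => by simp [hs]) (by simp), Finset.mul_sum]
    refine Finset.sum_congr rfl fun a _ => ?_
    simp only [if_true, dstar]
    ring
  have hg : ∑ s', ∑ a', dD s' a' * (w s' a' * (c * (γ * P s' a' s)))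
      = c * (γ * ∑ s', ∑ a', P s' a' s * dstar dD w s' a') := by
    simp only [Finset.mul_sum]
    refine Finset.sum_congr rfl fun s' _ => Finset.sum_congr rfl fun a' _ => ?_
    simp only [dstar]
    ring
  have hμ : ∑ s', μ0 s' * Pi.single (M := fun _ => ℝ) s c s' = μ0 s * c := by
    simp [Pi.single_apply]
  simp only [Lag, he, mul_add, mul_sub, Finset.sum_add_distrib, Finset.sum_sub_distrib, hd, hg,
    Pi.add_apply, hμ]
  ring

/-- A density ratio at which the Lagrangian attains its minimum in the dual variable satisfies
the Bellman flow equations. -/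
theorem bellmanFlow_of_forall_Lag_le
    (h : ∀ v', Lag P r μ0 γ dD f α v w ≤ Lag P r μ0 γ dD f α v' w) :
    BellmanFlow P μ0 γ (dstar dD w) := by
  classical
  intro s
  have h₁ := h (v + Pi.single s 1)
  have h₂ := h (v + Pi.single s (-1))
  rw [Lag_add_single] at h₁ h₂
  linarith

/-- Coordinatewise optimality of a box-constrained maximizer of the Lagrangian. -/
theorem coordinate_le_of_forall_Lag_le {B : ℝ} (hw : ∀ s a, 0 ≤ w s a ∧ w s a ≤ B)
    (h : ∀ w' : S → A → ℝ, (∀ s a, 0 ≤ w' s a ∧ w' s a ≤ B) →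
      Lag P r μ0 γ dD f α v w' ≤ Lag P r μ0 γ dD f α v w)
    {s : S} {a : A} (hd : 0 < dD s a) {x : ℝ} (hx : 0 ≤ x ∧ x ≤ B) :
    x * eV P r γ v s a - α * f x ≤ w s a * eV P r γ v s a - α * f (w s a) := by
  classical
  have hform : ∀ u : S → A → ℝ, Lag P r μ0 γ dD f α v u = (1 - γ) * ∑ s, μ0 s * v s
      + ∑ s, ∑ a, dD s a * (u s a * eV P r γ v s a - α * f (u s a)) := by
    intro u
    simp only [Lag, mul_sub, Finset.sum_sub_distrib, mul_left_comm _ α, ← Finset.mul_sum]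
    ring
  have hle := h (fun s' a' => if s' = s ∧ a' = a then x else w s' a') fun s' a' => by
    split_ifs
    exacts [hx, hw s' a']
  rw [hform, hform, add_le_add_iff_left, ← sub_nonneg, ← Finset.sum_sub_distrib] at hle
  simp only [← Finset.sum_sub_distrib] at hle
  rw [Finset.sum_eq_single s (fun s' _ hs => by simp [hs]) (by simp),
    Finset.sum_eq_single a (fun a' _ ha => by simp [ha]) (by simp)] at hle
  simp only [and_self, if_true, ← mul_sub] at hle
  exact sub_nonneg.mp (nonneg_of_mul_nonneg_right hle hd)

end Saddle

theorem sum_mul_le_of_forall_le {p v : S → ℝ} {M : ℝ} (hp : ∀ s, 0 ≤ p s)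
    (hsum : ∑ s, p s = 1) (h : ∀ s, v s ≤ M) : ∑ s, p s * v s ≤ M := by
  calc ∑ s, p s * v s ≤ ∑ s, p s * M :=
        Finset.sum_le_sum fun s _ => mul_le_mul_of_nonneg_left (h s) (hp s)
    _ = M := by rw [← Finset.sum_mul, hsum, one_mul]

theorem le_sum_mul_of_forall_le {p v : S → ℝ} {m : ℝ} (hp : ∀ s, 0 ≤ p s)
    (hsum : ∑ s, p s = 1) (h : ∀ s, m ≤ v s) : m ≤ ∑ s, p s * v s := by
  calc m = ∑ s, p s * m := by rw [← Finset.sum_mul, hsum, one_mul]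
    _ ≤ ∑ s, p s * v s :=
        Finset.sum_le_sum fun s _ => mul_le_mul_of_nonneg_left (h s) (hp s)

/-- Lemma 2: boundedness of the optimal dual variable `v*_{α,B_w}`
of the constrained & regularized LP. -/
theorem stmt6
    {S A : Type*} [Fintype S] [Fintype A] [Nonempty S] [Nonempty A]
    (P : S → A → S → ℝ) (r : S → A → ℝ) (μ0 : S → ℝ) (γ : ℝ) (dD : S → A → ℝ)
    (hMDP : MDPAssumptions P r μ0 γ dD)
    -- the data distribution is the occupancy of the behavior policy
    (hocc : ∀ s a, dD s a = occ P μ0 γ (behPolicy dD) s a)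
    (f f' : ℝ → ℝ) (α Bw Mf Bf' : ℝ) (hα : 0 < α) (hBw : 1 < Bw)
    (hderiv : ∀ x, HasDerivAt f (f' x) x) (hMf : 0 < Mf)
    (hsc : StrongConvexOn Set.univ Mf f)
    (hBf' : ∀ x, 0 ≤ x → x ≤ Bw → |f' x| ≤ Bf')
    (vst : S → ℝ) (wst : S → A → ℝ)
    (hsad : IsSaddleB P r μ0 γ dD f α Bw vst wst) :
    ∀ s, |vst s| ≤ (α * Bf' + 1) / (1 - γ) := by
  obtain ⟨hw, hv, hmax⟩ := hsad
  have hγ0 := hMDP.γ_nonneg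
  have hγ : 0 < 1 - γ := sub_pos.mpr hMDP.γ_lt_one
  have hBf0 : 0 ≤ α * Bf' :=
    mul_nonneg hα.le ((abs_nonneg _).trans (hBf' 0 le_rfl (by linarith)))
  have hflowD : BellmanFlow P μ0 γ dD := by
    have h := occ_bellmanFlow hMDP.P_nonneg hMDP.P_sum (fun s => (hMDP.μ0_pos s).le)
      hMDP.μ0_sum (normPolicy_isPolicy hMDP.dD_nonneg) hγ0 hMDP.γ_lt_one
    rwa [show dD = occ P μ0 γ (normPolicy dD) from funext fun s => funext (hocc s)]
  have hflow := bellmanFlow_of_forall_Lag_le hv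
  have hlip : ∀ x y, 0 ≤ x → x ≤ y → y ≤ Bw → |f y - f x| ≤ Bf' * (y - x) := by
    intro x y hx hxy hy
    have h := (convex_Icc 0 Bw).norm_image_sub_le_of_norm_hasDerivWithin_le
      (fun z _ => (hderiv z).hasDerivWithinAt) (fun z hz => hBf' z hz.1 hz.2)
      ⟨hx, hxy.trans hy⟩ ⟨hx.trans hxy, hy⟩
    rwa [Real.norm_eq_abs, Real.norm_eq_abs, abs_of_nonneg (sub_nonneg.mpr hxy)] at h
  -- every state has an action at which the lower constraint on `wst` is inactive
  have hlow : ∀ s, ∃ a, -(α * Bf') ≤ eV P r γ vst s a := by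
    intro s
    have hpos : 0 < ∑ a, dstar dD wst s a := by
      rw [hflow s]
      refine add_pos_of_pos_of_nonneg (mul_pos hγ (hMDP.μ0_pos s)) (mul_nonneg hγ0 ?_)
      exact Finset.sum_nonneg fun s' _ => Finset.sum_nonneg fun a' _ =>
        mul_nonneg (hMDP.P_nonneg s' a' s) (mul_nonneg (hw s' a').1 (hMDP.dD_nonneg s' a'))
    obtain ⟨a, -, ha⟩ := Finset.exists_lt_of_sum_lt (s := Finset.univ)
      (f := fun _ : A => (0 : ℝ)) (g := dstar dD wst s) (by simpa using hpos)
    have hwa : 0 < wst s a := pos_of_mul_pos_left ha (hMDP.dD_nonneg s a)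
    have hda : 0 < dD s a := pos_of_mul_pos_right ha (hw s a).1
    refine ⟨a, ?_⟩
    have hopt := coordinate_le_of_forall_Lag_le hw hmax hda
      (x := 0) ⟨le_rfl, by linarith⟩
    have hf := mul_le_mul_of_nonneg_left
      (abs_le.mp (hlip 0 (wst s a) le_rfl hwa.le (hw s a).2)).1 hα.le
    refine le_of_mul_le_mul_left ?_ hwa
    linarith
  -- every state has an action at which the upper constraint on `wst` is inactive
  have hupp : ∀ s, ∃ a, eV P r γ vst s a ≤ α * Bf' := by
    intro s
    have hlt : ∑ a, dstar dD wst s a < ∑ a, Bw * dD s a := by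
      rw [hflow s, ← Finset.mul_sum, hflowD s, mul_add]
      refine add_lt_add_of_lt_of_le
        (lt_mul_of_one_lt_left (mul_pos hγ (hMDP.μ0_pos s)) hBw) ?_
      rw [mul_left_comm]
      refine mul_le_mul_of_nonneg_left ?_ hγ0
      simp only [Finset.mul_sum]
      refine Finset.sum_le_sum fun s' _ => Finset.sum_le_sum fun a' _ => ?_
      rw [mul_left_comm]
      exact mul_le_mul_of_nonneg_left
        (mul_le_mul_of_nonneg_right (hw s' a').2 (hMDP.dD_nonneg s' a'))
        (hMDP.P_nonneg s' a' s)
    obtain ⟨a, -, ha⟩ := Finset.exists_lt_of_sum_lt hlt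
    have hmul : 0 < (Bw - wst s a) * dD s a := by
      rw [sub_mul]
      exact sub_pos.mpr ha
    have hwa : 0 < Bw - wst s a := pos_of_mul_pos_left hmul (hMDP.dD_nonneg s a)
    have hda : 0 < dD s a := pos_of_mul_pos_right hmul (sub_nonneg.mpr (hw s a).2)
    refine ⟨a, ?_⟩
    have hopt := coordinate_le_of_forall_Lag_le hw hmax hda
      (x := Bw) ⟨by linarith, le_rfl⟩
    have hf := mul_le_mul_of_nonneg_left
      (abs_le.mp (hlip (wst s a) Bw (hw s a).1 (hw s a).2 le_rfl)).2 hα.le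
    refine le_of_mul_le_mul_left ?_ hwa
    linarith
  obtain ⟨smax, hsmax⟩ := Finite.exists_max vst
  obtain ⟨smin, hsmin⟩ := Finite.exists_min vst
  have hM : vst smax ≤ (α * Bf' + 1) / (1 - γ) := by
    obtain ⟨a, ha⟩ := hlow smax
    have h := mul_le_mul_of_nonneg_left
      (sum_mul_le_of_forall_le (hMDP.P_nonneg smax a) (hMDP.P_sum smax a) hsmax) hγ0
    have hr := hMDP.r_le_one smax a
    rw [le_div_iff₀ hγ]
    unfold eV at ha
    linarith
  have hm : -((α * Bf' + 1) / (1 - γ)) ≤ vst smin := by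
    obtain ⟨a, ha⟩ := hupp smin
    have h := mul_le_mul_of_nonneg_left
      (le_sum_mul_of_forall_le (hMDP.P_nonneg smin a) (hMDP.P_sum smin a) hsmin) hγ0
    have hr := hMDP.r_nonneg smin a
    rw [← neg_div, div_le_iff₀ hγ]
    unfold eV at ha
    linarith
  exact fun s => abs_le.mpr ⟨hm.trans (hsmin s), (hsmax s).trans hM⟩
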